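/- Let S_1, …, S_k be bounded linear operators on H each admitting an A-adjoint, and let n ≥ 1 be an integer. Then ω_A( Σ_{i=1}^k S_i )^{2n} ≤ (k^{2n−1}/2) · ‖ Σ_{i=1}^k ( (S_i^{♯_A} S_i)^{n} + (S_i S_i^{♯_A})^{n} ) ‖_A. -/

import Mathlib

noncomputable section

open ContinuousLinearMap

variable {H : Type*} [NormedAddCommGroup H] [InnerProductSpace ℂ H] [CompleteSpace H]

/-- The semi-inner product induced by the positive operator `A`: `⟨x, y⟩_A := ⟨A x, y⟩`. -/
def innA (A : H →L[ℂ] H) (x y : H) : ℂ := inner ℂ (A x) y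

/-- The seminorm induced by `A`: `‖x‖_A := ⟨x, x⟩_A ^ (1/2)`. -/
def vnormA (A : H →L[ℂ] H) (x : H) : ℝ := Real.sqrt (innA A x x).re

/-- The `A`-operator seminorm: `‖T‖_A := sup {‖T x‖_A : ‖x‖_A = 1}`. -/
def opNormA (A T : H →L[ℂ] H) : ℝ :=
  sSup {c : ℝ | ∃ x : H, vnormA A x = 1 ∧ c = vnormA A (T x)}

/-- The `A`-numerical radius: `ω_A(T) := sup {|⟨T x, x⟩_A| : ‖x‖_A = 1}`. -/
def wA (A T : H →L[ℂ] H) : ℝ :=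
  sSup {c : ℝ | ∃ x : H, vnormA A x = 1 ∧ c = ‖innA A (T x) x‖}

/-- `T` admits an `A`-adjoint: there is a bounded operator `X` with `A X = T* A`. -/
def HasAAdjoint (A T : H →L[ℂ] H) : Prop :=
  ∃ X : H →L[ℂ] H, A ∘L X = adjoint T ∘L A

/-- `X` is the reduced `A`-adjoint `T^{♯_A}` of `T`: it solves `A X = T* A` and its range
is contained in the closure of the range of `A`. -/
def IsReducedAAdjoint (A T X : H →L[ℂ] H) : Prop :=
  (A ∘L X = adjoint T ∘L A) ∧ ∀ y : H, X y ∈ closure (Set.range A)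

/-- The Cauchy-Schwarz inequality for the semi-inner product of a positive operator. -/
theorem norm_innA_sq_le {B : H →L[ℂ] H} (hB : B.IsPositive) (x y : H) :
    ‖innA B x y‖ ^ 2 ≤ (innA B x x).re * (innA B y y).re := by
  let core : PreInnerProductSpace.Core ℂ H :=
    { inner := innA B
      conj_inner_symm := fun x y => by
        simp only [innA]
        rw [inner_conj_symm, hB.inner_left_eq_inner_right]
      re_inner_nonneg := fun x => hB.re_inner_nonneg_left x
      add_left := fun x y z => by simp only [innA, map_add, inner_add_left]
      smul_left := fun x y r => by simp only [innA, map_smul, inner_smul_left] }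
  have h := @InnerProductSpace.Core.inner_mul_inner_self_le ℂ H _ _ _ core x y
  have hsymm : ‖innA B y x‖ = ‖innA B x y‖ := by
    simp only [innA]
    rw [hB.inner_left_eq_inner_right, norm_inner_symm]
  change ‖innA B x y‖ * ‖innA B y x‖ ≤ (innA B x x).re * (innA B y y).re at h
  rwa [hsymm, ← sq] at h

theorem re_innA_self_nonneg {A : H →L[ℂ] H} (hA : A.IsPositive) (x : H) :
    0 ≤ (innA A x x).re :=
  hA.re_inner_nonneg_left x

theorem vnormA_sq {A : H →L[ℂ] H} (hA : A.IsPositive) (x : H) :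
    vnormA A x ^ 2 = (innA A x x).re :=
  Real.sq_sqrt (re_innA_self_nonneg hA x)

theorem re_innA_self_eq_one {A : H →L[ℂ] H} (hA : A.IsPositive) {x : H} (hx : vnormA A x = 1) :
    (innA A x x).re = 1 := by
  rw [← vnormA_sq hA, hx, one_pow]

theorem norm_innA_le {A : H →L[ℂ] H} (hA : A.IsPositive) (x y : H) :
    ‖innA A x y‖ ≤ vnormA A x * vnormA A y := by
  refine le_of_sq_le_sq ?_ (mul_nonneg (Real.sqrt_nonneg _) (Real.sqrt_nonneg _))
  rw [mul_pow, vnormA_sq hA, vnormA_sq hA]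
  exact norm_innA_sq_le hA x y

/-- An `A`-positive operator is `A`-selfadjoint. -/
theorem mul_eq_adjoint_mul {A P : H →L[ℂ] H} (hA : A.IsPositive) (hP : (A * P).IsPositive) :
    A * P = adjoint P * A := by
  have h := hP.isSelfAdjoint.star_eq
  rw [star_mul, hA.isSelfAdjoint.star_eq, star_eq_adjoint] at h
  exact h.symm

/-- Powers of an `A`-positive operator are `A`-positive. -/
theorem isPositive_mul_pow {A P : H →L[ℂ] H} (hA : A.IsPositive) (hP : (A * P).IsPositive)
    (m : ℕ) : (A * P ^ m).IsPositive := by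
  induction m using Nat.twoStepInduction with
  | zero => simpa using hA
  | one => simpa using hP
  | more m ih _ =>
    have h : A * P ^ (m + 2) = adjoint P * (A * P ^ m) * P := by
      rw [← mul_assoc, ← mul_eq_adjoint_mul hA hP, mul_assoc, mul_assoc, ← pow_succ,
        ← pow_succ']
    rw [h]
    exact ih.adjoint_conj P

theorem re_innA_pow_nonneg {A P : H →L[ℂ] H} (hA : A.IsPositive) (hP : (A * P).IsPositive)
    (m : ℕ) (x : H) : 0 ≤ (innA A ((P ^ m) x) x).re :=
  (isPositive_mul_pow hA hP m).re_inner_nonneg_left x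

/-- The moments `⟨P ^ m x, x⟩_A` of an `A`-positive operator form a log-convex sequence. -/
theorem re_innA_pow_succ_sq_le {A P : H →L[ℂ] H} (hA : A.IsPositive) (hP : (A * P).IsPositive)
    (m : ℕ) (x : H) :
    (innA A ((P ^ (m + 1)) x) x).re ^ 2 ≤
      (innA A ((P ^ m) x) x).re * (innA A ((P ^ (m + 2)) x) x).re := by
  have hmove : ∀ y : H, innA (A * P ^ m) y (P x) = innA A ((P ^ (m + 1)) y) x := fun y => by
    have h : A ((P ^ (m + 1)) y) = adjoint P (A ((P ^ m) y)) := by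
      rw [pow_succ']
      exact congrArg (fun T : H →L[ℂ] H => T ((P ^ m) y)) (mul_eq_adjoint_mul hA hP)
    simp only [innA]
    rw [h, adjoint_inner_left]
    rfl
  have h := norm_innA_sq_le (isPositive_mul_pow hA hP m) x (P x)
  rw [hmove, hmove] at h
  have hpow : (P ^ (m + 1)) (P x) = (P ^ (m + 2)) x := by
    rw [pow_succ P (m + 1)]
    rfl
  rw [hpow] at h
  refine le_trans ?_ h
  rw [← sq_abs]
  gcongr
  exact Complex.abs_re_le_norm _

/-- McCarthy's inequality for natural powers of an `A`-positive operator. -/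
theorem re_innA_pow_le {A P : H →L[ℂ] H} (hA : A.IsPositive) (hP : (A * P).IsPositive)
    {x : H} (hx : vnormA A x = 1) (m : ℕ) :
    (innA A (P x) x).re ^ m ≤ (innA A ((P ^ m) x) x).re := by
  have hnonneg := fun m => re_innA_pow_nonneg hA hP m x
  have hstep : ∀ m, (innA A (P x) x).re * (innA A ((P ^ m) x) x).re ≤
      (innA A ((P ^ (m + 1)) x) x).re := by
    intro m
    induction m with
    | zero => simp [re_innA_self_eq_one hA hx]
    | succ m ih =>
      have hconv := re_innA_pow_succ_sq_le hA hP m x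
      have hP1 : 0 ≤ (innA A (P x) x).re := by simpa using hnonneg 1
      rcases (hnonneg (m + 1)).eq_or_lt with h0 | hpos
      · rw [← h0, mul_zero]
        exact hnonneg (m + 2)
      · refine le_of_mul_le_mul_right ?_ hpos
        have h1 := mul_le_mul_of_nonneg_left hconv hP1
        have h2 := mul_le_mul_of_nonneg_right ih (hnonneg (m + 2))
        change _ ≤ (innA A ((P ^ (m + 2)) x) x).re * _
        linarith
  induction m with
  | zero => simp [re_innA_self_eq_one hA hx]
  | succ m ih =>
    rw [pow_succ']
    refine le_trans ?_ (hstep m)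
    gcongr
    simpa using hnonneg 1

theorem le_of_forall_pow_le_mul_pow {b c K : ℝ} (hc : 0 ≤ c)
    (h : ∀ m : ℕ, b ^ m ≤ K * c ^ m) : b ≤ c := by
  by_contra! hlt
  rcases hc.eq_or_lt with rfl | hpos
  · have := h 1
    norm_num at this
    linarith
  · obtain ⟨m, hm⟩ := pow_unbounded_of_one_lt K ((one_lt_div hpos).2 hlt)
    rw [div_pow, lt_div_iff₀ (pow_pos hpos m)] at hm
    exact (h m).not_gt hm

/-- An `A`-positive operator is bounded for the `A`-seminorm. -/
theorem re_innA_apply_le_norm {A P : H →L[ℂ] H} (hA : A.IsPositive) (hP : (A * P).IsPositive)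
    {x : H} (hx : vnormA A x = 1) : (innA A (P x) x).re ≤ ‖P‖ := by
  refine le_of_forall_pow_le_mul_pow (K := ‖A‖ * ‖x‖ * ‖x‖) (norm_nonneg P) fun m => ?_
  refine (re_innA_pow_le hA hP hx m).trans ?_
  have hPm : ‖(P ^ m) x‖ ≤ ‖P‖ ^ m * ‖x‖ := by
    induction m with
    | zero => simp
    | succ m ih =>
      rw [pow_succ', pow_succ', mul_assoc]
      exact (P.le_opNorm _).trans (mul_le_mul_of_nonneg_left ih (norm_nonneg P))
  calc (innA A ((P ^ m) x) x).re ≤ ‖innA A ((P ^ m) x) x‖ := Complex.re_le_norm _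
    _ ≤ ‖A ((P ^ m) x)‖ * ‖x‖ := norm_inner_le_norm _ _
    _ ≤ ‖A‖ * (‖P‖ ^ m * ‖x‖) * ‖x‖ := by
      gcongr
      exact (A.le_opNorm _).trans (mul_le_mul_of_nonneg_left hPm (norm_nonneg A))
    _ = ‖A‖ * ‖x‖ * ‖x‖ * ‖P‖ ^ m := by ring

theorem re_innA_sharp_mul {A T X : H →L[ℂ] H} (h : A * X = adjoint T * A) (x : H) :
    (innA A ((X * T) x) x).re = (innA A (T x) (T x)).re := by
  have hx : A (X (T x)) = adjoint T (A (T x)) :=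
    congrArg (fun R : H →L[ℂ] H => R (T x)) h
  change (inner ℂ (A (X (T x))) x).re = _
  rw [hx, adjoint_inner_left]
  rfl

theorem isPositive_mul_sharp_mul {A T X : H →L[ℂ] H} (hA : A.IsPositive)
    (h : A * X = adjoint T * A) : (A * (X * T)).IsPositive := by
  rw [← mul_assoc, h]
  exact hA.adjoint_conj T

/-- The relation of being an `A`-adjoint is symmetric. -/
theorem sharp_symm {A T X : H →L[ℂ] H} (hA : A.IsPositive) (h : A * X = adjoint T * A) :
    A * T = adjoint X * A := by
  have h' := congrArg star h
  simpa [← star_eq_adjoint, star_mul, hA.isSelfAdjoint.star_eq] using h'.symm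

theorem vnormA_le_opNormA {A T : H →L[ℂ] H} (hA : A.IsPositive) (hT : (A * T).IsPositive)
    {x : H} (hx : vnormA A x = 1) : vnormA A (T x) ≤ opNormA A T := by
  have h := mul_eq_adjoint_mul hA hT
  refine le_csSup ⟨Real.sqrt ‖T * T‖, ?_⟩ ⟨x, hx, rfl⟩
  rintro c ⟨y, hy, rfl⟩
  refine Real.sqrt_le_sqrt ?_
  rw [← re_innA_sharp_mul h]
  exact re_innA_apply_le_norm hA (isPositive_mul_sharp_mul hA h) hy

theorem re_innA_le_opNormA {A T : H →L[ℂ] H} (hA : A.IsPositive) (hT : (A * T).IsPositive)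
    {x : H} (hx : vnormA A x = 1) : (innA A (T x) x).re ≤ opNormA A T := by
  have h := (Complex.re_le_norm _).trans (norm_innA_le hA (T x) x)
  rw [hx, mul_one] at h
  exact h.trans (vnormA_le_opNormA hA hT hx)

theorem norm_innA_sq_le_sharp_mul {A T X : H →L[ℂ] H} (hA : A.IsPositive)
    (h : A * X = adjoint T * A) {x : H} (hx : vnormA A x = 1) :
    ‖innA A (T x) x‖ ^ 2 ≤ (innA A ((X * T) x) x).re := by
  have hCS := norm_innA_sq_le hA (T x) x
  rwa [re_innA_self_eq_one hA hx, mul_one, ← re_innA_sharp_mul h] at hCS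

theorem norm_innA_sharp {A T X : H →L[ℂ] H} (hA : A.IsPositive)
    (h : A * X = adjoint T * A) (x : H) : ‖innA A (X x) x‖ = ‖innA A (T x) x‖ := by
  have hx : A (X x) = adjoint T (A x) := congrArg (fun R : H →L[ℂ] H => R x) h
  simp only [innA]
  rw [hx, adjoint_inner_left, hA.inner_left_eq_inner_right, norm_inner_symm]

theorem norm_innA_pow_le {A T X : H →L[ℂ] H} (hA : A.IsPositive)
    (h : A * X = adjoint T * A) {x : H} (hx : vnormA A x = 1) (n : ℕ) :
    ‖innA A (T x) x‖ ^ (2 * n) ≤ (innA A (((X * T) ^ n + (T * X) ^ n) x) x).re / 2 := by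
  have h' := sharp_symm hA h
  have h1 := (pow_le_pow_left₀ (sq_nonneg _) (norm_innA_sq_le_sharp_mul hA h hx) n).trans
    (re_innA_pow_le hA (isPositive_mul_sharp_mul hA h) hx n)
  have h2 := (pow_le_pow_left₀ (sq_nonneg _) (norm_innA_sq_le_sharp_mul hA h' hx) n).trans
    (re_innA_pow_le hA (isPositive_mul_sharp_mul hA h') hx n)
  rw [norm_innA_sharp hA h] at h2
  have hadd : (innA A (((X * T) ^ n + (T * X) ^ n) x) x).re =
      (innA A (((X * T) ^ n) x) x).re + (innA A (((T * X) ^ n) x) x).re := by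
    simp only [innA, add_apply, map_add, inner_add_left, Complex.add_re]
  rw [pow_mul, hadd]
  linarith

theorem innA_sum_apply {ι : Type*} (s : Finset ι) (A : H →L[ℂ] H) (T : ι → H →L[ℂ] H) (x y : H) :
    innA A ((∑ i ∈ s, T i) x) y = ∑ i ∈ s, innA A (T i x) y := by
  simp only [innA, sum_apply, map_sum, sum_inner]

theorem stmt14 (A : H →L[ℂ] H) (hA : A.IsPositive) (hA0 : A ≠ 0)
    (k : ℕ) (hk : 1 ≤ k) (n : ℕ) (hn : 1 ≤ n)
    (S Ssharp : Fin k → (H →L[ℂ] H))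
    (hS : ∀ i, IsReducedAAdjoint A (S i) (Ssharp i)) :
    wA A (∑ i, S i) ^ (2 * n) ≤
      ((k : ℝ) ^ (2 * n - 1) / 2) *
        opNormA A (∑ i, ((Ssharp i * S i) ^ n + (S i * Ssharp i) ^ n)) := by
  set T := ∑ i, ((Ssharp i * S i) ^ n + (S i * Ssharp i) ^ n) with hT
  have hadj : ∀ i, A * Ssharp i = adjoint (S i) * A := fun i => (hS i).1
  have hTpos : (A * T).IsPositive := by
    rw [hT, Finset.mul_sum]
    refine isPositive_sum _ fun i _ => ?_
    rw [mul_add]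
    exact (isPositive_mul_pow hA (isPositive_mul_sharp_mul hA (hadj i)) n).add
      (isPositive_mul_pow hA (isPositive_mul_sharp_mul hA (sharp_symm hA (hadj i))) n)
  have hbound : ∀ x, vnormA A x = 1 → ‖innA A ((∑ i, S i) x) x‖ ^ (2 * n) ≤
      ((k : ℝ) ^ (2 * n - 1) / 2) * opNormA A T := by
    intro x hx
    calc ‖innA A ((∑ i, S i) x) x‖ ^ (2 * n)
        ≤ (∑ i, ‖innA A (S i x) x‖) ^ (2 * n) := by
          rw [innA_sum_apply]
          gcongr
          exact norm_sum_le _ _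
      _ ≤ (k : ℝ) ^ (2 * n - 1) * ∑ i, ‖innA A (S i x) x‖ ^ (2 * n) := by
          have h := pow_sum_le_card_mul_sum_pow (s := Finset.univ)
            (f := fun i => ‖innA A (S i x) x‖) (fun i _ => norm_nonneg _) (2 * n - 1)
          rwa [Nat.sub_add_cancel (by lia), Finset.card_fin] at h
      _ ≤ (k : ℝ) ^ (2 * n - 1) * ((innA A (T x) x).re / 2) := by
          rw [hT, innA_sum_apply, Complex.re_sum, Finset.sum_div]
          gcongr with i
          exact norm_innA_pow_le hA (hadj i) hx n
      _ ≤ (k : ℝ) ^ (2 * n - 1) * (opNormA A T / 2) := by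
          gcongr
          exact re_innA_le_opNormA hA hTpos hx
      _ = ((k : ℝ) ^ (2 * n - 1) / 2) * opNormA A T := by ring
  have hop : 0 ≤ opNormA A T := Real.sSup_nonneg <| by
    rintro c ⟨x, -, rfl⟩
    exact Real.sqrt_nonneg _
  have hw : 0 ≤ wA A (∑ i, S i) := Real.sSup_nonneg <| by
    rintro c ⟨x, -, rfl⟩
    exact norm_nonneg _
  set M := ((k : ℝ) ^ (2 * n - 1) / 2) * opNormA A T
  have hM : 0 ≤ M := by positivity
  have hroot : (M ^ (((2 * n : ℕ) : ℝ)⁻¹)) ^ (2 * n) = M := Real.rpow_inv_natCast_pow hM (by lia)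
  rw [← hroot]
  refine pow_le_pow_left₀ hw (Real.sSup_le ?_ (Real.rpow_nonneg hM _)) _
  rintro c ⟨x, hx, rfl⟩
  refine le_of_pow_le_pow_left₀ (n := 2 * n) (by lia) (Real.rpow_nonneg hM _) ?_
  rw [hroot]
  exact hbound x hx
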